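/- For any interpretation I* of the variables in F* that is diverse over Σ*_p(F), there is a truth assignment J to the variables of encf(F*) that obeys transitivity and satisfies J[encf(F*)] = I*[F*]. -/

import Mathlib

mutual
inductive EufTerm (Fn Pr : Type) : Type
  | app : Fn → List (EufTerm Fn Pr) → EufTerm Fn Pr
  | ite : EufFormula Fn Pr → EufTerm Fn Pr → EufTerm Fn Pr → EufTerm Fn Pr
inductive EufFormula (Fn Pr : Type) : Type
  | tt : EufFormula Fn Pr
  | ff : EufFormula Fn Pr
  | not : EufFormula Fn Pr → EufFormula Fn Pr
  | and : EufFormula Fn Pr → EufFormula Fn Pr → EufFormula Fn Pr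
  | or : EufFormula Fn Pr → EufFormula Fn Pr → EufFormula Fn Pr
  | eq : EufTerm Fn Pr → EufTerm Fn Pr → EufFormula Fn Pr
  | papp : Pr → List (EufTerm Fn Pr) → EufFormula Fn Pr
end

structure Interp (Fn Pr : Type) (D : Type u) where
  fn : Fn → List D → D
  pr : Pr → List D → Bool

open Classical in
mutual
noncomputable def evalT {Fn Pr : Type} {D : Type} (I : Interp Fn Pr D) : EufTerm Fn Pr → D
  | .app f args => I.fn f (args.attach.map (fun t => evalT I t.1))
  | .ite G T1 T2 => if evalF I G then evalT I T1 else evalT I T2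
termination_by t => sizeOf t
decreasing_by
  all_goals simp_wf
  all_goals try omega
  all_goals (have := List.sizeOf_lt_of_mem t.2; omega)
noncomputable def evalF {Fn Pr : Type} {D : Type} (I : Interp Fn Pr D) : EufFormula Fn Pr → Bool
  | .tt => true
  | .ff => false
  | .not G => !evalF I G
  | .and G1 G2 => evalF I G1 && evalF I G2
  | .or G1 G2 => evalF I G1 || evalF I G2
  | .eq T1 T2 => decide (evalT I T1 = evalT I T2)
  | .papp p args => I.pr p (args.attach.map (fun t => evalT I t.1))
termination_by g => sizeOf g
decreasing_by
  all_goals simp_wf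
  all_goals try omega
  all_goals (have := List.sizeOf_lt_of_mem t.2; omega)
end
def ValidOn {Fn Pr : Type} (F : EufFormula Fn Pr) (D : Type) : Prop :=
  ∀ I : Interp Fn Pr D, evalF I F = true

def UniversallyValid {Fn Pr : Type} (F : EufFormula Fn Pr) : Prop :=
  ∀ D : Type, Nonempty D → ValidOn F D

/-- Expressions: terms or formulas. -/
inductive EufExpr (Fn Pr : Type) : Type
  | t : EufTerm Fn Pr → EufExpr Fn Pr
  | f : EufFormula Fn Pr → EufExpr Fn Pr

/-- Immediate (proper) subexpression relation. -/
inductive ImmSub {Fn Pr : Type} : EufExpr Fn Pr → EufExpr Fn Pr → Prop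
  | appArg {g : Fn} {args : List (EufTerm Fn Pr)} {T : EufTerm Fn Pr} :
      T ∈ args → ImmSub (.t T) (.t (.app g args))
  | iteC {G : EufFormula Fn Pr} {T1 T2 : EufTerm Fn Pr} : ImmSub (.f G) (.t (.ite G T1 T2))
  | ite1 {G : EufFormula Fn Pr} {T1 T2 : EufTerm Fn Pr} : ImmSub (.t T1) (.t (.ite G T1 T2))
  | ite2 {G : EufFormula Fn Pr} {T1 T2 : EufTerm Fn Pr} : ImmSub (.t T2) (.t (.ite G T1 T2))
  | not {G : EufFormula Fn Pr} : ImmSub (.f G) (.f (.not G))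
  | andL {G1 G2 : EufFormula Fn Pr} : ImmSub (.f G1) (.f (.and G1 G2))
  | andR {G1 G2 : EufFormula Fn Pr} : ImmSub (.f G2) (.f (.and G1 G2))
  | orL {G1 G2 : EufFormula Fn Pr} : ImmSub (.f G1) (.f (.or G1 G2))
  | orR {G1 G2 : EufFormula Fn Pr} : ImmSub (.f G2) (.f (.or G1 G2))
  | eqL {T1 T2 : EufTerm Fn Pr} : ImmSub (.t T1) (.f (.eq T1 T2))
  | eqR {T1 T2 : EufTerm Fn Pr} : ImmSub (.t T2) (.f (.eq T1 T2))
  | pappArg {p : Pr} {args : List (EufTerm Fn Pr)} {T : EufTerm Fn Pr} :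
      T ∈ args → ImmSub (.t T) (.f (.papp p args))

/-- `SubExpr a b`: `a` occurs (as a subexpression) in `b`. -/
def SubExpr {Fn Pr : Type} (a b : EufExpr Fn Pr) : Prop := Relation.ReflTransGen ImmSub a b

def TermInT {Fn Pr : Type} (T S : EufTerm Fn Pr) : Prop := SubExpr (.t T) (.t S)
def TermInF {Fn Pr : Type} (T : EufTerm Fn Pr) (F : EufFormula Fn Pr) : Prop :=
  SubExpr (.t T) (.f F)
def FormulaInT {Fn Pr : Type} (G : EufFormula Fn Pr) (S : EufTerm Fn Pr) : Prop :=
  SubExpr (.f G) (.t S)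
def FormulaInF {Fn Pr : Type} (G F : EufFormula Fn Pr) : Prop := SubExpr (.f G) (.f F)

def IsAppTerm {Fn Pr : Type} : EufTerm Fn Pr → Prop
  | .app _ _ => True
  | _ => False

/-- `𝒯(F)`: the function application terms occurring in `F`. -/
def AppTermsF {Fn Pr : Type} (F : EufFormula Fn Pr) : Set (EufTerm Fn Pr) :=
  {T | IsAppTerm T ∧ TermInF T F}

/-- A function symbol occurs in `F` when some application of it occurs in `F`. -/
def FnInF {Fn Pr : Type} (g : Fn) (F : EufFormula Fn Pr) : Prop :=
  ∃ args, TermInF (EufTerm.app g args) F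

def PrInF {Fn Pr : Type} (p : Pr) (F : EufFormula Fn Pr) : Prop :=
  ∃ args, FormulaInF (EufFormula.papp p args) F

/-- `I` is diverse for `F` with respect to the set `Sg` of function symbols. -/
def DiverseFor {Fn Pr D : Type} (I : Interp Fn Pr D) (F : EufFormula Fn Pr)
    (Sg : Set Fn) : Prop :=
  ∀ (g : Fn) (args : List (EufTerm Fn Pr)), g ∈ Sg →
    TermInF (EufTerm.app g args) F →
    ∀ T2 ∈ AppTermsF F, evalT I (EufTerm.app g args) = evalT I T2 →
      ∃ args2, T2 = EufTerm.app g args2 ∧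
        List.Forall₂ (fun a b => evalT I a = evalT I b) args args2

mutual
/-- PEUF g-terms, where `isP` designates the p-function symbols. -/
inductive IsGTerm {Fn Pr : Type} (isP : Fn → Prop) : EufTerm Fn Pr → Prop
  | ite {G : EufFormula Fn Pr} {T1 T2 : EufTerm Fn Pr} :
      IsGFormula isP G → IsGTerm isP T1 → IsGTerm isP T2 → IsGTerm isP (.ite G T1 T2)
  | app {g : Fn} {args : List (EufTerm Fn Pr)} :
      ¬ isP g → (∀ T ∈ args, IsPTerm isP T) → IsGTerm isP (.app g args)
/-- PEUF p-terms. -/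
inductive IsPTerm {Fn Pr : Type} (isP : Fn → Prop) : EufTerm Fn Pr → Prop
  | g {T : EufTerm Fn Pr} : IsGTerm isP T → IsPTerm isP T
  | ite {G : EufFormula Fn Pr} {T1 T2 : EufTerm Fn Pr} :
      IsGFormula isP G → IsPTerm isP T1 → IsPTerm isP T2 → IsPTerm isP (.ite G T1 T2)
  | app {g : Fn} {args : List (EufTerm Fn Pr)} :
      isP g → (∀ T ∈ args, IsPTerm isP T) → IsPTerm isP (.app g args)
/-- PEUF g-formulas. -/
inductive IsGFormula {Fn Pr : Type} (isP : Fn → Prop) : EufFormula Fn Pr → Prop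
  | tt : IsGFormula isP .tt
  | ff : IsGFormula isP .ff
  | not {G : EufFormula Fn Pr} : IsGFormula isP G → IsGFormula isP (.not G)
  | and {G1 G2 : EufFormula Fn Pr} :
      IsGFormula isP G1 → IsGFormula isP G2 → IsGFormula isP (.and G1 G2)
  | or {G1 G2 : EufFormula Fn Pr} :
      IsGFormula isP G1 → IsGFormula isP G2 → IsGFormula isP (.or G1 G2)
  | eq {T1 T2 : EufTerm Fn Pr} :
      IsGTerm isP T1 → IsGTerm isP T2 → IsGFormula isP (.eq T1 T2)
  | papp {p : Pr} {args : List (EufTerm Fn Pr)} :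
      (∀ T ∈ args, IsPTerm isP T) → IsGFormula isP (.papp p args)
/-- PEUF p-formulas. -/
inductive IsPFormula {Fn Pr : Type} (isP : Fn → Prop) : EufFormula Fn Pr → Prop
  | g {G : EufFormula Fn Pr} : IsGFormula isP G → IsPFormula isP G
  | and {G1 G2 : EufFormula Fn Pr} :
      IsPFormula isP G1 → IsPFormula isP G2 → IsPFormula isP (.and G1 G2)
  | or {G1 G2 : EufFormula Fn Pr} :
      IsPFormula isP G1 → IsPFormula isP G2 → IsPFormula isP (.or G1 G2)
  | eq {T1 T2 : EufTerm Fn Pr} :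
      IsPTerm isP T1 → IsPTerm isP T2 → IsPFormula isP (.eq T1 T2)
end

/-- The p-function symbols occurring in `F`. -/
def PSymbolsIn {Fn Pr : Type} (isP : Fn → Prop) (F : EufFormula Fn Pr) : Set Fn :=
  {g | isP g ∧ FnInF g F}

/-- `I` is maximally diverse for the p-formula `F`. -/
def MaxDiverse {Fn Pr D : Type} (isP : Fn → Prop) (I : Interp Fn Pr D)
    (F : EufFormula Fn Pr) : Prop :=
  DiverseFor I F (PSymbolsIn isP F)

/-- `I'` refines `I` on the term set `Ts`. -/
def RefinesOn {Fn Pr D D' : Type} (I' : Interp Fn Pr D') (I : Interp Fn Pr D)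
    (Ts : Set (EufTerm Fn Pr)) : Prop :=
  ∀ T1 ∈ Ts, ∀ T2 ∈ Ts, evalT I' T1 = evalT I' T2 → evalT I T1 = evalT I T2

def ProperRefinesOn {Fn Pr D D' : Type} (I' : Interp Fn Pr D') (I : Interp Fn Pr D)
    (Ts : Set (EufTerm Fn Pr)) : Prop :=
  RefinesOn I' I Ts ∧
    ∃ T1 ∈ Ts, ∃ T2 ∈ Ts, evalT I T1 = evalT I T2 ∧ evalT I' T1 ≠ evalT I' T2
/-- Propositional formulas over a variable type `V`. -/
inductive PropForm (V : Type) : Type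
  | tt : PropForm V
  | ff : PropForm V
  | var : V → PropForm V
  | not : PropForm V → PropForm V
  | and : PropForm V → PropForm V → PropForm V
  | or : PropForm V → PropForm V → PropForm V

/-- Evaluation of a propositional formula under a truth assignment. -/
def PropForm.evalP {V : Type} (J : V → Bool) : PropForm V → Bool
  | .tt => true
  | .ff => false
  | .var v => J v
  | .not φ => !φ.evalP J
  | .and φ ψ => φ.evalP J && ψ.evalP J
  | .or φ ψ => φ.evalP J || ψ.evalP J

/-- Variables of the propositional encoding: the propositional variables of `F*`
together with the equality variables `e_{i,j}`. -/
abbrev EncVar (Pr : Type) : Type := Pr ⊕ ℕ × ℕ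

/-- `e_{[i,j]}`. -/
def evarF {Pr : Type} (i j : ℕ) : PropForm (EncVar Pr) :=
  if i = j then .tt else if i < j then .var (.inr (i, j)) else .var (.inr (j, i))

def bigOr {V : Type} (l : List (PropForm V)) : PropForm V := l.foldr .or .ff

open Classical in
mutual
/-- `enct_i(T)`: the conditions under which term `T` selects the domain variable `v i`. -/
noncomputable def enct {Fn Pr : Type} (v : ℕ → Fn) (N M : ℕ) (i : ℕ) :
    EufTerm Fn Pr → PropForm (EncVar Pr)
  | .app g _ => if g = v i then .tt else .ff
  | .ite G T1 T2 =>
      .or (.and (encf v N M G) (enct v N M i T1))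
          (.and (.not (encf v N M G)) (enct v N M i T2))
/-- `encf(G)`: the propositional encoding of the formula `G`. -/
noncomputable def encf {Fn Pr : Type} (v : ℕ → Fn) (N M : ℕ) :
    EufFormula Fn Pr → PropForm (EncVar Pr)
  | .tt => .tt
  | .ff => .ff
  | .not G => .not (encf v N M G)
  | .and G1 G2 => .and (encf v N M G1) (encf v N M G2)
  | .or G1 G2 => .or (encf v N M G1) (encf v N M G2)
  | .papp p _ => .var (.inl p)
  | .eq T1 T2 =>
      .or
        (bigOr ((List.range' 1 N).flatMap (fun i =>
          (List.range' 1 N).map (fun j =>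
            PropForm.and (enct v N M i T1) (.and (evarF i j) (enct v N M j T2))))))
        (bigOr ((List.range' (N+1) M).map (fun i =>
          PropForm.and (enct v N M i T1) (enct v N M i T2))))
end

/-- A truth assignment obeys transitivity on the equality variables `e_{i,j}`, `1 ≤ i,j ≤ N`. -/
def ObeysTrans {Pr : Type} (J : EncVar Pr → Bool) (N : ℕ) : Prop :=
  ∀ i j k, 1 ≤ i → i ≤ N → 1 ≤ j → j ≤ N → 1 ≤ k → k ≤ N →
    (evarF (Pr := Pr) i j).evalP J = true → (evarF (Pr := Pr) j k).evalP J = true →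
    (evarF (Pr := Pr) i k).evalP J = true

open Classical in
/-- `sel_{I}(T)`: the index of the domain variable selected by the ITE controls of `T`. -/
noncomputable def selT {Fn Pr D : Type} (v : ℕ → Fn) (NM : ℕ) (I : Interp Fn Pr D) :
    EufTerm Fn Pr → ℕ
  | .app g _ => sInf {i | 1 ≤ i ∧ i ≤ NM ∧ g = v i}
  | .ite G T1 T2 => if evalF I G = true then selT v NM I T1 else selT v NM I T2

/-- `F` contains only domain variables (among `v 1, …, v NM`) and propositional variables. -/
def VarsOnlyEnum {Fn Pr : Type} (v : ℕ → Fn) (NM : ℕ) (F : EufFormula Fn Pr) : Prop :=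
  (∀ (g : Fn) (args : List (EufTerm Fn Pr)), TermInF (EufTerm.app g args) F →
      args = [] ∧ ∃ i, 1 ≤ i ∧ i ≤ NM ∧ g = v i) ∧
  (∀ (p : Pr) (args : List (EufTerm Fn Pr)), FormulaInF (EufFormula.papp p args) F →
      args = [])

theorem bigOr_iff {V : Type} (J : V → Bool) (l : List (PropForm V)) :
    (bigOr l).evalP J = true ↔ ∃ φ ∈ l, φ.evalP J = true := by
  induction l with
  | nil => simp [bigOr, PropForm.evalP]
  | cons a l ih =>
    have : bigOr (a :: l) = .or a (bigOr l) := rfl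
    simp [this, PropForm.evalP, ih]

open Classical in
noncomputable def theJ {Fn Pr D : Type} (v : ℕ → Fn) (I : Interp Fn Pr D) : EncVar Pr → Bool
  | .inl p => I.pr p []
  | .inr (i, j) => decide (I.fn (v i) [] = I.fn (v j) [])

theorem evarF_iff {Fn Pr D : Type} (v : ℕ → Fn) (I : Interp Fn Pr D) (i j : ℕ) :
    (evarF (Pr := Pr) i j).evalP (theJ v I) = true ↔ I.fn (v i) [] = I.fn (v j) [] := by
  unfold evarF
  split_ifs with h1 h2
  · simp [PropForm.evalP, h1]
  · simp [PropForm.evalP, theJ]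
  · simp [PropForm.evalP, theJ, eq_comm]

def TermGood {Fn Pr D : Type} (v : ℕ → Fn) (N M : ℕ) (I : Interp Fn Pr D)
    (T : EufTerm Fn Pr) : Prop :=
  ∃ k, 1 ≤ k ∧ k ≤ N + M ∧ evalT I T = I.fn (v k) [] ∧
    ∀ i, 1 ≤ i → i ≤ N + M → ((enct v N M i T).evalP (theJ v I) = true ↔ i = k)

theorem eq_case {Fn Pr D : Type} (v : ℕ → Fn) (N M : ℕ)
    (I : Interp Fn Pr D)
    (hdiv : ∀ i, N + 1 ≤ i → i ≤ N + M → ∀ j, 1 ≤ j → j ≤ N + M → j ≠ i →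
      I.fn (v i) [] ≠ I.fn (v j) []) (T1 T2 : EufTerm Fn Pr)
    (h1 : TermGood v N M I T1) (h2 : TermGood v N M I T2) :
    (encf v N M (.eq T1 T2)).evalP (theJ v I) = evalF I (.eq T1 T2) := by
  obtain ⟨a, ha1, ha2, hae, ha⟩ := h1
  obtain ⟨b, hb1, hb2, hbe, hb⟩ := h2
  rw [Bool.eq_iff_iff]
  simp only [encf, evalF, PropForm.evalP, Bool.or_eq_true, bigOr_iff, List.mem_flatMap,
    List.mem_map, List.mem_range'_1, decide_eq_true_eq, hae, hbe]
  constructor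
  · rintro (⟨φ, ⟨i, hi, j, hj, rfl⟩, h⟩ | ⟨φ, ⟨i, hi, rfl⟩, h⟩)
    · simp only [PropForm.evalP, Bool.and_eq_true, evarF_iff] at h
      rw [ha i (by omega) (by omega), hb j (by omega) (by omega)] at h
      obtain ⟨rfl, h, rfl⟩ := h
      exact h
    · simp only [PropForm.evalP, Bool.and_eq_true] at h
      rw [ha i (by omega) (by omega), hb i (by omega) (by omega)] at h
      obtain ⟨rfl, rfl⟩ := h
      rfl
  · intro h
    by_cases hab : a ≤ N ∧ b ≤ N
    · left
      refine ⟨_, ⟨a, by omega, b, by omega, rfl⟩, ?_⟩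
      simp only [PropForm.evalP, Bool.and_eq_true, evarF_iff]
      exact ⟨(ha a ha1 ha2).2 rfl, h, (hb b hb1 hb2).2 rfl⟩
    · have hEq : a = b := by
        by_contra hne
        by_cases haN : a ≤ N
        · exact hdiv b (by omega) hb2 a ha1 ha2 hne h.symm
        · exact hdiv a (by omega) ha2 b hb1 hb2 (Ne.symm hne) h
      subst hEq
      right
      refine ⟨_, ⟨a, by omega, rfl⟩, ?_⟩
      simp only [PropForm.evalP, Bool.and_eq_true]
      exact ⟨(ha a ha1 ha2).2 rfl, (hb a ha1 ha2).2 rfl⟩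

mutual
theorem mainT {Fn Pr D : Type} (v : ℕ → Fn) (N M : ℕ)
    (Fstar : EufFormula Fn Pr) (hvars : VarsOnlyEnum v (N + M) Fstar)
    (hinj : ∀ i j, 1 ≤ i → i ≤ N + M → 1 ≤ j → j ≤ N + M → v i = v j → i = j)
    (I : Interp Fn Pr D)
    (hdiv : ∀ i, N + 1 ≤ i → i ≤ N + M → ∀ j, 1 ≤ j → j ≤ N + M → j ≠ i →
      I.fn (v i) [] ≠ I.fn (v j) []) :
    (T : EufTerm Fn Pr) → TermInF T Fstar → TermGood v N M I T
  | .app g args => fun h => by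
      obtain ⟨rfl, k, hk1, hk2, rfl⟩ := hvars.1 g args h
      refine ⟨k, hk1, hk2, by simp [evalT], fun i hi1 hi2 => ?_⟩
      simp only [enct]
      split_ifs with hv
      · simp [PropForm.evalP, hinj k i hk1 hk2 hi1 hi2 hv]
      · simp only [PropForm.evalP, Bool.false_eq_true, false_iff]
        rintro rfl
        exact hv rfl
  | .ite G T1 T2 => fun h => by
      have hG := mainF v N M Fstar hvars hinj I hdiv G (Relation.ReflTransGen.head .iteC h)
      have h1 := mainT v N M Fstar hvars hinj I hdiv T1 (Relation.ReflTransGen.head .ite1 h)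
      have h2 := mainT v N M Fstar hvars hinj I hdiv T2 (Relation.ReflTransGen.head .ite2 h)
      cases hg : evalF I G
      · obtain ⟨k, hk1, hk2, he, hk⟩ := h2
        refine ⟨k, hk1, hk2, by simp [evalT, hg, he], fun i hi1 hi2 => ?_⟩
        simp [enct, PropForm.evalP, hG, hg, hk i hi1 hi2]
      · obtain ⟨k, hk1, hk2, he, hk⟩ := h1
        refine ⟨k, hk1, hk2, by simp [evalT, hg, he], fun i hi1 hi2 => ?_⟩
        simp [enct, PropForm.evalP, hG, hg, hk i hi1 hi2]
termination_by T => sizeOf T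
theorem mainF {Fn Pr D : Type} (v : ℕ → Fn) (N M : ℕ)
    (Fstar : EufFormula Fn Pr) (hvars : VarsOnlyEnum v (N + M) Fstar)
    (hinj : ∀ i j, 1 ≤ i → i ≤ N + M → 1 ≤ j → j ≤ N + M → v i = v j → i = j)
    (I : Interp Fn Pr D)
    (hdiv : ∀ i, N + 1 ≤ i → i ≤ N + M → ∀ j, 1 ≤ j → j ≤ N + M → j ≠ i →
      I.fn (v i) [] ≠ I.fn (v j) []) :
    (G : EufFormula Fn Pr) → FormulaInF G Fstar →
      (encf v N M G).evalP (theJ v I) = evalF I G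
  | .tt => fun _ => by simp [encf, evalF, PropForm.evalP]
  | .ff => fun _ => by simp [encf, evalF, PropForm.evalP]
  | .not G => fun h => by
      have h1 := mainF v N M Fstar hvars hinj I hdiv G (Relation.ReflTransGen.head .not h)
      simp [encf, evalF, PropForm.evalP, h1]
  | .and G1 G2 => fun h => by
      have h1 := mainF v N M Fstar hvars hinj I hdiv G1 (Relation.ReflTransGen.head .andL h)
      have h2 := mainF v N M Fstar hvars hinj I hdiv G2 (Relation.ReflTransGen.head .andR h)
      simp [encf, evalF, PropForm.evalP, h1, h2]
  | .or G1 G2 => fun h => by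
      have h1 := mainF v N M Fstar hvars hinj I hdiv G1 (Relation.ReflTransGen.head .orL h)
      have h2 := mainF v N M Fstar hvars hinj I hdiv G2 (Relation.ReflTransGen.head .orR h)
      simp [encf, evalF, PropForm.evalP, h1, h2]
  | .eq T1 T2 => fun h =>
      eq_case v N M I hdiv T1 T2
        (mainT v N M Fstar hvars hinj I hdiv T1 (Relation.ReflTransGen.head .eqL h))
        (mainT v N M Fstar hvars hinj I hdiv T2 (Relation.ReflTransGen.head .eqR h))
  | .papp p args => fun h => by
      have := hvars.2 p args h
      subst this
      simp [encf, evalF, PropForm.evalP, theJ]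
termination_by G => sizeOf G
end

/-- For any interpretation `I*` of the variables of `F*` that is diverse
over `Σ*_p(F)` (the variables `v_{N+1}, …, v_{N+M}`), there is a truth assignment `J`
obeying transitivity with `J[encf(F*)] = I*[F*]`. -/
theorem F_eF_lemma {Fn Pr D : Type} (v : ℕ → Fn) (N M : ℕ)
    (Fstar : EufFormula Fn Pr) (hvars : VarsOnlyEnum v (N + M) Fstar)
    (hinj : ∀ i j, 1 ≤ i → i ≤ N + M → 1 ≤ j → j ≤ N + M → v i = v j → i = j)
    (I : Interp Fn Pr D)
    (hdiv : ∀ i, N + 1 ≤ i → i ≤ N + M → ∀ j, 1 ≤ j → j ≤ N + M → j ≠ i →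
      I.fn (v i) [] ≠ I.fn (v j) []) :
    ∃ J : EncVar Pr → Bool, ObeysTrans J N ∧
      (encf v N M Fstar).evalP J = evalF I Fstar := by
  refine ⟨theJ v I, ?_, mainF v N M Fstar hvars hinj I hdiv Fstar .refl⟩
  intro i j k _ _ _ _ _ _ h1 h2
  rw [evarF_iff] at *
  exact h1.trans h2
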